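/- Exhaustive blocked clause elimination is symmetry-preserving: if F* is obtained from a CNF formula F by exhaustively removing blocked clauses, then Aut_syn(F)_{{Lit(F*)}} = Aut_syn(F) and Aut_syn(F)↓_{Lit(F*)} ⊆ Aut_syn(F*). -/

import Mathlib

/-- A literal over a variable type `V`: a variable or its negation. -/
inductive Lit (V : Type) where
  | pos : V → Lit V
  | neg : V → Lit V
deriving DecidableEq

variable {V : Type} [DecidableEq V]

/-- Negation of a literal (so that double negation is the identity). -/
def Lit.negate : Lit V → Lit V
  | .pos v => .neg v
  | .neg v => .pos v

/-- The underlying variable of a literal. -/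
def Lit.var : Lit V → V
  | .pos v => v
  | .neg v => v

/-- A clause is a finite set of literals. -/
abbrev Clause (V : Type) := Finset (Lit V)

/-- A CNF formula is a finite set of clauses. -/
abbrev CNF (V : Type) := Finset (Clause V)

/-- `Var(F)`: the variables occurring in a formula. -/
def CNF.vars (F : CNF V) : Finset V := Finset.sup F (fun C => Finset.image Lit.var C)

/-- `Lit(F) = Var(F) ∪ {v̄ : v ∈ Var(F)}`. -/
def CNF.lits (F : CNF V) : Finset (Lit V) :=
  Finset.image Lit.pos (CNF.vars F) ∪ Finset.image Lit.neg (CNF.vars F)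

/-- The value of a literal under a complete assignment (given on the variables,
which determines a consistent complete assignment on all literals). -/
def Lit.val (σ : V → Bool) : Lit V → Bool
  | .pos v => σ v
  | .neg v => !(σ v)

/-- `C[σ]`: delete from `C` every literal mapped to `⊥` by `σ`
(i.e. keep `l` with `¬l ∉ σ`). -/
def Clause.reduce (σ : V → Bool) (C : Clause V) : Clause V :=
  Finset.filter (fun l => Lit.val σ (Lit.negate l) = false) C

/-- `F[σ]`: delete every clause containing a literal mapped to `⊤` by `σ`
(for a complete assignment: every clause containing no false literal is kept)
and delete from each remaining clause every literal mapped to `⊥`. -/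
def CNF.reduce (F : CNF V) (σ : V → Bool) : CNF V :=
  Finset.image (Clause.reduce σ) (Finset.filter (fun C => ∀ l ∈ C, Lit.val σ l = false) F)

/-- Apply a map on literals elementwise to clauses and formulas. -/
def CNF.map (φ : Lit V → Lit V) (F : CNF V) : CNF V :=
  Finset.image (fun C => Finset.image φ C) F

/-- `φ` is a syntactic symmetry of `F`: a bijection of `Lit(F)` respecting
negation with `φ(F) = F`. -/
def IsSynSym (F : CNF V) (φ : Lit V → Lit V) : Prop :=
  Set.BijOn φ (CNF.lits F : Set (Lit V)) (CNF.lits F : Set (Lit V)) ∧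
  (∀ l ∈ CNF.lits F, φ (Lit.negate l) = Lit.negate (φ l)) ∧
  CNF.map φ F = F

/-- `φ` is a semantic symmetry of `F`: a bijection of `Lit(F)` respecting
negation with `F[σ] = φ(F)[σ]` for every complete assignment `σ`. -/
def IsSemSym (F : CNF V) (φ : Lit V → Lit V) : Prop :=
  Set.BijOn φ (CNF.lits F : Set (Lit V)) (CNF.lits F : Set (Lit V)) ∧
  (∀ l ∈ CNF.lits F, φ (Lit.negate l) = Lit.negate (φ l)) ∧
  ∀ σ : V → Bool, CNF.reduce F σ = CNF.reduce (CNF.map φ F) σ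

/-- Extend a map defined on the literal set `S` by the identity outside `S`. -/
def extendId (S : Finset (Lit V)) (φ : Lit V → Lit V) : Lit V → Lit V :=
  fun l => if l ∈ S then φ l else l

/-- `F[l ↦ ⊤]`: delete every clause containing `l` and delete `l̄` from every
remaining clause. -/
def CNF.assignTrue (F : CNF V) (l : Lit V) : CNF V :=
  Finset.image (fun C => Finset.erase C (Lit.negate l)) (Finset.filter (fun C => l ∉ C) F)

/-- A clause is a tautology if it contains some literal with its negation. -/
def IsTaut (C : Clause V) : Prop := ∃ l ∈ C, Lit.negate l ∈ C

/-- `l ∈ C` blocks `C` in `F`: every resolvent of `C` on `l` with a clause of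
`F` containing `l̄` is a tautology. -/
def Blocks (F : CNF V) (l : Lit V) (C : Clause V) : Prop :=
  l ∈ C ∧ ∀ C' ∈ F, Lit.negate l ∈ C' → IsTaut (C.erase l ∪ C'.erase (Lit.negate l))

/-- One application of blocked clause elimination: remove a blocked clause. -/
def BCEStep (F F' : CNF V) : Prop :=
  ∃ C ∈ F, (∃ l : Lit V, Blocks F l C) ∧ F' = F.erase C

/-!
The formula `F*` left by exhaustive blocked clause elimination is the largest subformula of `F`
without blocked clauses: a literal blocking `C` in a formula also blocks `C` in every subformula,
so no elimination step can remove a clause of a blocked-clause-free subformula. A syntactic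
symmetry of `F` carries subformulas of `F` to subformulas of `F` and preserves blockedness, so the
image of `F*` is contained in `F*`; it has as many clauses, hence equals `F*`.
-/

namespace Lit

omit [DecidableEq V] in
theorem negate_negate (l : Lit V) : l.negate.negate = l := by
  cases l <;> rfl

omit [DecidableEq V] in
theorem var_eq_iff {l : Lit V} {v : V} : l.var = v ↔ l = pos v ∨ l = neg v := by
  cases l <;> simp [var]

end Lit

namespace CNF

variable {F G : CNF V} {C : Clause V} {l : Lit V} {φ : Lit V → Lit V}

theorem mem_vars {v : V} : v ∈ F.vars ↔ ∃ C ∈ F, Lit.pos v ∈ C ∨ Lit.neg v ∈ C := by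
  simp [vars, Finset.mem_sup, Lit.var_eq_iff, and_or_left, exists_or]

theorem mem_lits : l ∈ F.lits ↔ ∃ C ∈ F, l ∈ C ∨ l.negate ∈ C := by
  cases l <;> simp [lits, mem_vars, Lit.negate, or_comm]

theorem subset_lits (hC : C ∈ F) : C ⊆ F.lits :=
  fun _ hl => mem_lits.2 ⟨C, hC, Or.inl hl⟩

theorem negate_mem_lits (hl : l ∈ F.lits) : l.negate ∈ F.lits := by
  obtain ⟨C, hC, hlC⟩ := mem_lits.1 hl
  exact mem_lits.2 ⟨C, hC, by rwa [Lit.negate_negate, or_comm]⟩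

theorem lits_mono (hGF : G ⊆ F) : G.lits ⊆ F.lits := fun _ hl =>
  let ⟨C, hC, hlC⟩ := mem_lits.1 hl
  mem_lits.2 ⟨C, hGF hC, hlC⟩

theorem lits_map (hneg : ∀ l ∈ F.lits, φ l.negate = (φ l).negate) :
    (F.map φ).lits = F.lits.image φ := by
  refine Finset.Subset.antisymm (fun m hm => ?_) (Finset.image_subset_iff.2 fun l hl => ?_)
  · obtain ⟨D, hD, hmD⟩ := mem_lits.1 hm
    obtain ⟨C, hC, rfl⟩ := Finset.mem_image.1 hD
    have image_subset : C.image φ ⊆ F.lits.image φ := Finset.image_subset_image (subset_lits hC)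
    rcases hmD with hpos | hnegated
    · exact image_subset hpos
    · obtain ⟨l, hl, hlm⟩ := Finset.mem_image.1 (image_subset hnegated)
      refine Finset.mem_image.2 ⟨l.negate, negate_mem_lits hl, ?_⟩
      rw [hneg l hl, hlm, Lit.negate_negate]
  · obtain ⟨C, hC, hlC⟩ := mem_lits.1 hl
    refine mem_lits.2 ⟨C.image φ, Finset.mem_image_of_mem _ hC, ?_⟩
    rw [← hneg l hl]
    exact hlC.imp (Finset.mem_image_of_mem φ) (Finset.mem_image_of_mem φ)

theorem card_map (hinj : Set.InjOn φ (F.lits : Set (Lit V))) : (F.map φ).card = F.card :=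
  Finset.card_image_of_injOn <| (Finset.image_injOn_powerset_of_injOn hinj).mono
    fun _ hC => Finset.mem_powerset.2 (subset_lits hC)

end CNF

/-- The resolvent `C ∘_l D` of two clauses on the literal `l`, as it occurs in `Blocks`. It is
defined for arbitrary `C` and `D`, and is meant for `l ∈ C` and `l̄ ∈ D`. -/
def Clause.resolvent (l : Lit V) (C D : Clause V) : Clause V :=
  C.erase l ∪ D.erase l.negate

/-- No clause of `F` is blocked in `F`: the formulas on which blocked clause elimination stops. -/
def BlockedClauseFree (F : CNF V) : Prop :=
  ¬ ∃ C ∈ F, ∃ l : Lit V, Blocks F l C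

section Blocking

variable {F F' Fs G : CNF V} {C D : Clause V} {l : Lit V} {φ : Lit V → Lit V}

theorem Clause.resolvent_subset_lits (hC : C ∈ F) (hD : D ∈ F) : resolvent l C D ⊆ F.lits :=
  Finset.union_subset ((Finset.erase_subset _ _).trans (CNF.subset_lits hC))
    ((Finset.erase_subset _ _).trans (CNF.subset_lits hD))

theorem Clause.resolvent_image_subset (hneg : φ l.negate = (φ l).negate) :
    resolvent (φ l) (C.image φ) (D.image φ) ⊆ (resolvent l C D).image φ := by
  rw [resolvent, resolvent, ← hneg, Finset.image_union]
  exact Finset.union_subset_union (Finset.erase_image_subset_image_erase ..)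
    (Finset.erase_image_subset_image_erase ..)

omit [DecidableEq V] in
theorem IsTaut.mono (hC : IsTaut C) (hCD : C ⊆ D) : IsTaut D :=
  let ⟨l, hl, hl'⟩ := hC
  ⟨l, hCD hl, hCD hl'⟩

theorem IsTaut.of_image (hinj : Set.InjOn φ (C ∪ C.image Lit.negate : Finset (Lit V)))
    (hneg : ∀ l ∈ C, φ l.negate = (φ l).negate) (h : IsTaut (C.image φ)) : IsTaut C := by
  obtain ⟨_, hφl, hφm⟩ := h
  obtain ⟨l, hl, rfl⟩ := Finset.mem_image.1 hφl
  obtain ⟨m, hm, hml⟩ := Finset.mem_image.1 hφm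
  have m_eq : m = l.negate :=
    hinj (Finset.mem_union_left _ hm) (Finset.mem_union_right _ (Finset.mem_image_of_mem _ hl))
      (hml.trans (hneg l hl).symm)
  exact ⟨l, hl, m_eq ▸ hm⟩

theorem Blocks.anti (hl : Blocks F l C) (hGF : G ⊆ F) : Blocks G l C :=
  ⟨hl.1, fun D hD => hl.2 D (hGF hD)⟩

theorem Blocks.of_map (hinj : Set.InjOn φ (F.lits : Set (Lit V)))
    (hneg : ∀ l ∈ F.lits, φ l.negate = (φ l).negate) (hC : C ∈ F) (hl : l ∈ C)
    (h : Blocks (F.map φ) (φ l) (C.image φ)) : Blocks F l C := by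
  refine ⟨hl, fun D hD hlD => ?_⟩
  have negate_φl : φ l.negate = (φ l).negate := hneg l (CNF.subset_lits hC hl)
  have taut_resolvent : IsTaut (Clause.resolvent (φ l) (C.image φ) (D.image φ)) :=
    h.2 (D.image φ) (Finset.mem_image_of_mem _ hD) (negate_φl ▸ Finset.mem_image_of_mem φ hlD)
  have taut_image : IsTaut ((Clause.resolvent l C D).image φ) :=
    taut_resolvent.mono (Clause.resolvent_image_subset negate_φl)
  have resolvent_subset : Clause.resolvent l C D ⊆ F.lits := Clause.resolvent_subset_lits hC hD
  refine taut_image.of_image (hinj.mono ?_) fun m hm => hneg m (resolvent_subset hm)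
  exact Finset.coe_subset.2 <| Finset.union_subset resolvent_subset <|
    Finset.image_subset_iff.2 fun m hm => CNF.negate_mem_lits (resolvent_subset hm)

theorem BlockedClauseFree.map (hinj : Set.InjOn φ (F.lits : Set (Lit V)))
    (hneg : ∀ l ∈ F.lits, φ l.negate = (φ l).negate) (hF : BlockedClauseFree F) :
    BlockedClauseFree (F.map φ) := by
  rintro ⟨D, hD, m, hm⟩
  obtain ⟨C, hC, rfl⟩ := Finset.mem_image.1 hD
  obtain ⟨l, hl, rfl⟩ := Finset.mem_image.1 hm.1
  exact hF ⟨C, hC, l, hm.of_map hinj hneg hC hl⟩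

theorem BCEStep.subset (h : BCEStep F F') : F' ⊆ F := by
  obtain ⟨C, _, _, rfl⟩ := h
  exact Finset.erase_subset C F

theorem BlockedClauseFree.subset_of_bceStep (hG : BlockedClauseFree G) (hGF : G ⊆ F)
    (h : BCEStep F F') : G ⊆ F' := by
  obtain ⟨C, _, ⟨l, hl⟩, rfl⟩ := h
  exact Finset.subset_erase.2 ⟨hGF, fun hC => hG ⟨C, hC, l, hl.anti hGF⟩⟩

theorem subset_of_bce (hsteps : Relation.ReflTransGen BCEStep F Fs) : Fs ⊆ F := by
  induction hsteps with
  | refl => rfl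
  | tail _ hstep ih => exact hstep.subset.trans ih

theorem BlockedClauseFree.subset_of_bce (hG : BlockedClauseFree G) (hGF : G ⊆ F)
    (hsteps : Relation.ReflTransGen BCEStep F Fs) : G ⊆ Fs := by
  induction hsteps with
  | refl => exact hGF
  | tail _ hstep ih => exact hG.subset_of_bceStep ih hstep

theorem isGreatest_blockedClauseFree_of_bce (hsteps : Relation.ReflTransGen BCEStep F Fs)
    (hFs : BlockedClauseFree Fs) : IsGreatest {G | G ⊆ F ∧ BlockedClauseFree G} Fs :=
  ⟨⟨subset_of_bce hsteps, hFs⟩, fun _ hG => hG.2.subset_of_bce hG.1 hsteps⟩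

end Blocking

namespace IsSynSym

variable {F Fs G : CNF V} {φ : Lit V → Lit V}

theorem injOn_of_subset (h : IsSynSym F φ) (hGF : G ⊆ F) :
    Set.InjOn φ (G.lits : Set (Lit V)) :=
  h.1.injOn.mono (Finset.coe_subset.2 (CNF.lits_mono hGF))

theorem map_negate_of_subset (h : IsSynSym F φ) (hGF : G ⊆ F) :
    ∀ l ∈ G.lits, φ l.negate = (φ l).negate :=
  fun l hl => h.2.1 l (CNF.lits_mono hGF hl)

theorem map_subset_of_subset (h : IsSynSym F φ) (hGF : G ⊆ F) : G.map φ ⊆ F :=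
  (Finset.image_subset_image hGF).trans_eq h.2.2

theorem of_map_eq (h : IsSynSym F φ) (hGF : G ⊆ F) (hG : G.map φ = G) : IsSynSym G φ := by
  have hneg := h.map_negate_of_subset hGF
  have image_lits : φ '' G.lits = (G.lits : Set (Lit V)) := by
    rw [← Finset.coe_image, ← CNF.lits_map hneg, hG]
  have bijOn_lits : Set.BijOn φ (G.lits : Set (Lit V)) (G.lits : Set (Lit V)) := by
    simpa only [image_lits] using (h.injOn_of_subset hGF).bijOn_image
  exact ⟨bijOn_lits, hneg, hG⟩

theorem map_eq_of_isGreatest (h : IsSynSym F φ)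
    (hFs : IsGreatest {G | G ⊆ F ∧ BlockedClauseFree G} Fs) : Fs.map φ = Fs := by
  obtain ⟨⟨hsub, hfree⟩, hub⟩ := hFs
  have hinj := h.injOn_of_subset hsub
  have map_subset : Fs.map φ ⊆ Fs :=
    hub ⟨h.map_subset_of_subset hsub, hfree.map hinj (h.map_negate_of_subset hsub)⟩
  exact Finset.eq_of_subset_of_card_le map_subset (CNF.card_map hinj).ge

end IsSynSym

/-- Exhaustive blocked clause elimination is
symmetry-preserving: if `F*` is obtained from `F` by exhaustively removing
blocked clauses, then every syntactic symmetry of `F` setwise stabilizes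
`Lit(F*)` (so `Aut_syn(F)_{{Lit(F*)}} = Aut_syn(F)`) and its restriction to
`Lit(F*)` is a syntactic symmetry of `F*`
(so `Aut_syn(F)↓_{Lit(F*)} ⊆ Aut_syn(F*)`). -/
theorem exhaustive_bce_symmetry_preserving (F Fs : CNF V)
    (hsteps : Relation.ReflTransGen BCEStep F Fs)
    (hdone : ¬ ∃ C ∈ Fs, ∃ l : Lit V, Blocks Fs l C) :
    (∀ φ : Lit V → Lit V, IsSynSym F φ →
        φ '' (CNF.lits Fs : Set (Lit V)) = (CNF.lits Fs : Set (Lit V))) ∧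
    (∀ φ : Lit V → Lit V, IsSynSym F φ →
        φ '' (CNF.lits Fs : Set (Lit V)) = (CNF.lits Fs : Set (Lit V)) →
        IsSynSym Fs φ) := by
  have hFs : IsGreatest {G | G ⊆ F ∧ BlockedClauseFree G} Fs :=
    isGreatest_blockedClauseFree_of_bce hsteps hdone
  have isSynSym_Fs : ∀ φ, IsSynSym F φ → IsSynSym Fs φ := fun φ hφ =>
    hφ.of_map_eq hFs.1.1 (hφ.map_eq_of_isGreatest hFs)
  exact ⟨fun φ hφ => (isSynSym_Fs φ hφ).1.image_eq, fun φ hφ _ => isSynSym_Fs φ hφ⟩
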